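/- The operators L^{1/2}_m on the neutral fermion Fock space F satisfy the Virasoro relations with central charge 1/2: for all m, n ∈ ℤ, L^{1/2}_m ∘ L^{1/2}_n − L^{1/2}_n ∘ L^{1/2}_m = (m−n) L^{1/2}_{m+n} + δ_{m,−n} · ((m³−m)/24) · id_F. (These are the modes of the well-known Virasoro field L^{1/2}(z) = (1/2):∂_z φ^D(z) φ^D(z): of central charge 1/2 on F^{⊗1/2}.) -/

import Mathlib

noncomputable section

/-- The neutral fermion Fock space `F = F^{⊗1/2}`: the complex vector space with
basis `{e_S : S a finite subset of ℕ}`. -/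
abbrev FockD : Type := Finset ℕ →₀ ℂ

/-- Basis vector `e_S`. -/
def eD (S : Finset ℕ) : FockD := Finsupp.single S 1

/-- Action of the fermion mode `a_m` on the basis vector `e_S`. -/
def aVec (m : ℤ) (S : Finset ℕ) : FockD :=
  if 0 ≤ m then
    if m.toNat ∈ S then 0
    else ((-1 : ℂ) ^ (S.filter (fun s => m.toNat < s)).card) • eD (insert m.toNat S)
  else
    if (-m - 1).toNat ∈ S then
      ((-1 : ℂ) ^ (S.filter (fun s => (-m - 1).toNat < s)).card) • eD (S.erase ((-m - 1).toNat))
    else 0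

/-- The fermion mode `a_m` as a linear operator on `F`. -/
def aOp (m : ℤ) : FockD →ₗ[ℂ] FockD :=
  Finsupp.lsum ℂ fun S => LinearMap.toSpanSingleton ℂ FockD (aVec m S)

/-- Fermionic normal ordered product `:a_i a_j:`. -/
def NO (i j : ℤ) : FockD →ₗ[ℂ] FockD :=
  if 0 ≤ i then (aOp i).comp (aOp j) else -((aOp j).comp (aOp i))

/-- Heisenberg operator `h_n = (1/2) ∑_{i∈ℤ} (−1)^{i+1} :a_i a_{−2n−1−i}:`
(on each vector only finitely many summands are nonzero). -/
def hD (n : ℤ) (x : FockD) : FockD :=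
  (1 / 2 : ℂ) • ∑ᶠ i : ℤ, ((-1 : ℂ) ^ (i + 1)) • NO i (-2 * n - 1 - i) x

/-- Virasoro operator `L^{1/2}_m = (1/2) ∑_{i∈ℤ} i · :a_i a_{−m−i−1}:`. -/
def LhalfD (m : ℤ) (x : FockD) : FockD :=
  (1 / 2 : ℂ) • ∑ᶠ i : ℤ, (i : ℂ) • NO i (-m - i - 1) x

/-- 2-point Virasoro operator `L¹_n = (1/2) ∑_{j∈ℤ} :h_j h_{n−j}:`, where the bosonic
normal ordered product is `:h_j h_k: = h_j h_k` if `j ≤ k` and `h_k h_j` otherwise. -/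
def L1D (n : ℤ) (x : FockD) : FockD :=
  (1 / 2 : ℂ) • ∑ᶠ j : ℤ, if j ≤ n - j then hD j (hD (n - j) x) else hD (n - j) (hD j x)

/-- Charge `c(S) = #{s ∈ S : s odd} − #{s ∈ S : s even}`. -/
def chg (S : Finset ℕ) : ℤ :=
  ((S.filter fun s => Odd s).card : ℤ) - ((S.filter fun s => Even s).card : ℤ)

/-- Charge-`n` component `F_{(n)}`: the span of the `e_S` with `c(S) = n`. -/
def FockComp (n : ℤ) : Submodule ℂ FockD :=
  Submodule.span ℂ {x : FockD | ∃ S : Finset ℕ, chg S = n ∧ x = eD S}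

/-- Index set of the vacuum-like vector `v_n`. -/
def vSet (n : ℤ) : Finset ℕ :=
  if 0 ≤ n then (Finset.range n.toNat).image fun i => 2 * i + 1
  else (Finset.range (-n).toNat).image fun i => 2 * i

/-- Vacuum-like vector `v_n` (`v_0 = e_∅`, `v_n = e_{{1,3,…,2n−1}}`,
`v_{−n} = e_{{0,2,…,2n−2}}` for `n > 0`). -/
def vD (n : ℤ) : FockD := eD (vSet n)

/-- Sign. -/
def sg (p : ℕ) (S : Finset ℕ) : ℂ := (-1 : ℂ) ^ (S.filter (fun s => p < s)).card

lemma sg_insert (p q : ℕ) (S : Finset ℕ) (h : q ∉ S) :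
    sg p (insert q S) = if p < q then - sg p S else sg p S := by
  unfold sg
  rw [Finset.filter_insert]
  split_ifs with h1
  · rw [Finset.card_insert_of_notMem (by simp [h]), pow_succ]; ring
  · rfl

lemma sg_erase (p q : ℕ) (S : Finset ℕ) (h : q ∈ S) :
    sg p (S.erase q) = if p < q then - sg p S else sg p S := by
  have := sg_insert p q (S.erase q) (by simp)
  rw [Finset.insert_erase h] at this
  rw [this]; split_ifs <;> simp

lemma sg_sq (p : ℕ) (S : Finset ℕ) : sg p S * sg p S = 1 := by
  unfold sg; rw [← mul_pow]; simp

lemma aOp_e (m : ℤ) (S : Finset ℕ) : aOp m (eD S) = aVec m S := by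
  simp [aOp, eD]

lemma aOp_pos (p : ℕ) (S : Finset ℕ) :
    aOp (p : ℤ) (eD S) = if p ∈ S then 0 else sg p S • eD (insert p S) := by
  rw [aOp_e]; simp [aVec, sg]

lemma aOp_neg (p : ℕ) (S : Finset ℕ) :
    aOp (-(p : ℤ) - 1) (eD S) = if p ∈ S then sg p S • eD (S.erase p) else 0 := by
  rw [aOp_e]
  have h : ¬ (0 ≤ -(p : ℤ) - 1) := by omega
  have h2 : (-(-(p : ℤ) - 1) - 1).toNat = p := by omega
  simp only [aVec, h, h2, sg, if_false]

lemma car_pp (p q : ℕ) (S : Finset ℕ) :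
    aOp (p : ℤ) (aOp (q : ℤ) (eD S)) + aOp (q : ℤ) (aOp (p : ℤ) (eD S)) = 0 := by
  rcases eq_or_ne p q with rfl | hpq
  · by_cases h : p ∈ S <;> simp [aOp_pos, h]
  · by_cases hp : p ∈ S <;> by_cases hq : q ∈ S <;>
      simp [aOp_pos, hp, hq, hpq, hpq.symm, sg_insert, smul_smul]
    rw [Finset.insert_comm, mul_comm (sg q S)]
    rcases lt_or_gt_of_ne hpq with h | h <;> simp [h, not_lt_of_gt h]

lemma car_nn (p q : ℕ) (S : Finset ℕ) :
    aOp (-(p : ℤ) - 1) (aOp (-(q : ℤ) - 1) (eD S))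
      + aOp (-(q : ℤ) - 1) (aOp (-(p : ℤ) - 1) (eD S)) = 0 := by
  rcases eq_or_ne p q with rfl | hpq
  · by_cases h : p ∈ S <;> simp [aOp_neg, h]
  · by_cases hp : p ∈ S <;> by_cases hq : q ∈ S <;>
      simp [aOp_neg, hp, hq, hpq, hpq.symm, sg_erase, smul_smul]
    rw [Finset.erase_right_comm, mul_comm (sg q S)]
    rcases lt_or_gt_of_ne hpq with h | h <;> simp [h, not_lt_of_gt h]

lemma car_pn (p q : ℕ) (S : Finset ℕ) :
    aOp (p : ℤ) (aOp (-(q : ℤ) - 1) (eD S))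
      + aOp (-(q : ℤ) - 1) (aOp (p : ℤ) (eD S)) = if p = q then eD S else 0 := by
  rcases eq_or_ne p q with rfl | hpq
  · by_cases h : p ∈ S <;>
      simp [aOp_neg, aOp_pos, h, sg_erase, sg_insert, smul_smul, sg_sq, Finset.insert_erase]
  · by_cases hp : p ∈ S <;> by_cases hq : q ∈ S <;>
      simp [aOp_neg, aOp_pos, hp, hq, hpq, hpq.symm, sg_erase, sg_insert, smul_smul]
    rw [Finset.erase_insert_of_ne hpq, mul_comm (sg q S)]
    rcases lt_or_gt_of_ne hpq with h | h <;> simp [h, not_lt_of_gt h]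

lemma car_e (i j : ℤ) (S : Finset ℕ) :
    aOp i (aOp j (eD S)) + aOp j (aOp i (eD S)) = if i + j = -1 then eD S else 0 := by
  have key : ∀ i : ℤ, (∃ p : ℕ, i = p) ∨ (∃ p : ℕ, i = -(p : ℤ) - 1) := by
    intro i
    rcases le_or_gt 0 i with h | h
    · exact Or.inl ⟨i.toNat, by omega⟩
    · exact Or.inr ⟨(-i - 1).toNat, by omega⟩
  rcases key i with ⟨p, rfl⟩ | ⟨p, rfl⟩ <;> rcases key j with ⟨q, rfl⟩ | ⟨q, rfl⟩
  · rw [car_pp, if_neg (by omega)]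
  · rw [car_pn]; congr 1; apply propext; omega
  · rw [add_comm, car_pn]; congr 1; apply propext; omega
  · rw [car_nn, if_neg (by omega)]

lemma car (i j : ℤ) (x : FockD) :
    aOp i (aOp j x) + aOp j (aOp i x) = (if i + j = -1 then (1 : ℂ) else 0) • x := by
  have : (aOp i).comp (aOp j) + (aOp j).comp (aOp i)
      = (if i + j = -1 then (1 : ℂ) else 0) • LinearMap.id := by
    refine Finsupp.lhom_ext' fun S => LinearMap.ext_ring ?_
    have := car_e i j S
    simp only [eD] at this
    by_cases h : i + j = -1 <;> simp [this, h]
  simpa only [LinearMap.add_apply, LinearMap.comp_apply, LinearMap.smul_apply, LinearMap.id_apply] using LinearMap.congr_fun this x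

lemma aOp_ann (x : FockD) : ∃ N : ℤ, 0 ≤ N ∧ ∀ i : ℤ, i < -N → aOp i x = 0 := by
  induction x using Finsupp.induction_linear with
  | zero => exact ⟨0, le_rfl, by simp⟩
  | add f g hf hg =>
    obtain ⟨N, h0, hN⟩ := hf
    obtain ⟨M, h1, hM⟩ := hg
    exact ⟨N + M, by omega, fun i hi => by rw [map_add, hN i (by omega), hM i (by omega), add_zero]⟩
  | single S c =>
    refine ⟨(S.sup id : ℕ) + 1, by omega, fun i hi => ?_⟩
    have h1 : Finsupp.single S c = c • eD S := by simp [eD]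
    rw [h1, map_smul]
    obtain ⟨p, rfl⟩ : ∃ p : ℕ, i = -(p : ℤ) - 1 := ⟨(-i - 1).toNat, by omega⟩
    rw [aOp_neg, if_neg, smul_zero]
    intro hp
    have : p ≤ S.sup id := Finset.le_sup (f := id) hp
    omega

/-- Normal ordered product with shifted cutoff. -/
def NS (s i j : ℤ) : FockD →ₗ[ℂ] FockD :=
  if 0 ≤ i + s then (aOp i).comp (aOp j) else -((aOp j).comp (aOp i))

lemma NO_eq (i j : ℤ) : NO i j = NS 0 i j := by simp [NO, NS]

lemma NS_fin (s : ℤ) (f : ℤ → ℂ) (c : ℤ) (x : FockD) :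
    (Function.support fun i : ℤ => f i • NS s i (c - i) x).Finite := by
  obtain ⟨N, h0, hN⟩ := aOp_ann x
  refine (Set.finite_Icc (-N - |s|) (N + |c| + |s|)).subset ?_
  intro i hi
  by_contra hc
  apply hi
  simp only [Set.mem_Icc, not_and_or, not_le] at hc
  have hs := abs_nonneg s
  have hs1 := le_abs_self s
  have hs2 := neg_abs_le s
  have hc1 := le_abs_self c
  have hc2 := abs_nonneg c
  rcases hc with h | h
  · have : ¬ (0 ≤ i + s) := by omega
    simp [NS, this, hN i (by omega)]
  · have : 0 ≤ i + s := by omega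
    simp [NS, this, hN (c - i) (by omega)]

lemma NS_diff (s i j : ℤ) (x : FockD) : NS s i j x = NO i j x +
    ((if i + j = -1 then (1 : ℂ) else 0) *
      (if 0 ≤ i then (if 0 ≤ i + s then 0 else -1) else (if 0 ≤ i + s then 1 else 0))) • x := by
  have := car i j x
  have h2 : aOp i (aOp j x) = (if i + j = -1 then (1 : ℂ) else 0) • x - aOp j (aOp i x) :=
    eq_sub_of_add_eq this
  by_cases h1 : 0 ≤ i <;> by_cases h3 : 0 ≤ i + s <;> simp [NS, NO, h1, h3, h2] <;> abel

lemma NO_anti (i j : ℤ) (x : FockD) : NO i j x = - NO j i x := by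
  have h := car i j x
  have h2 : aOp i (aOp j x) = (if i + j = -1 then (1 : ℂ) else 0) • x - aOp j (aOp i x) :=
    eq_sub_of_add_eq h
  by_cases h1 : 0 ≤ i <;> by_cases h3 : 0 ≤ j <;> simp [NO, h1, h3]
  · rw [h2, if_neg (by omega)]; simp
  · rw [h2, if_neg (by omega)]; simp

lemma NO_sum_zero (c : ℤ) (x : FockD) : ∑ᶠ i : ℤ, NO i (c - i) x = 0 := by
  have h : ∑ᶠ i : ℤ, NO i (c - i) x = ∑ᶠ i : ℤ, NO (c - i) i x := by
    have := finsum_comp_equiv (Equiv.subLeft c) (f := fun i : ℤ => NO i (c - i) x)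
    rw [← this]
    simp
  have h2 : ∑ᶠ i : ℤ, NO (c - i) i x = - ∑ᶠ i : ℤ, NO i (c - i) x := by
    rw [← finsum_neg_distrib]
    exact finsum_congr fun i => NO_anti _ _ _
  rw [h2] at h
  exact self_eq_neg.mp h

/-- Linear version of `LhalfD`. -/
def LL (m : ℤ) : FockD →ₗ[ℂ] FockD where
  toFun x := LhalfD m x
  map_add' x y := by
    have hf := NS_fin 0 (fun i => (i : ℂ)) (-m - 1)
    have e : ∀ i : ℤ, -m - i - 1 = -m - 1 - i := fun i => by ring
    simp only [LhalfD, e, NO_eq]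
    rw [← smul_add, ← finsum_add_distrib (hf x) (hf y)]
    simp
  map_smul' r x := by
    have hf := NS_fin 0 (fun i => (i : ℂ)) (-m - 1)
    have e : ∀ i : ℤ, -m - i - 1 = -m - 1 - i := fun i => by ring
    simp only [LhalfD, e, NO_eq, RingHom.id_apply]
    rw [smul_comm r, smul_finsum' r (hf x)]
    congr 1
    exact finsum_congr fun i => by rw [map_smul, smul_comm]

lemma LL_apply (m : ℤ) (x : FockD) :
    LL m x = (1 / 2 : ℂ) • ∑ᶠ i : ℤ, (i : ℂ) • NO i (-m - 1 - i) x := by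
  have e : ∀ i : ℤ, -m - i - 1 = -m - 1 - i := fun i => by ring
  simp only [LL, LinearMap.coe_mk, AddHom.coe_mk, LhalfD, e]

lemma NO_comm (i j k : ℤ) (x : FockD) :
    NO i j (aOp k x) - aOp k (NO i j x) =
      (if j + k = -1 then (1 : ℂ) else 0) • aOp i x
      - (if i + k = -1 then (1 : ℂ) else 0) • aOp j x := by
  have h1 : ∀ y, aOp k (aOp i y) = (if i + k = -1 then (1 : ℂ) else 0) • y - aOp i (aOp k y) :=
    fun y => eq_sub_of_add_eq' (car i k y)
  have h2 : ∀ y, aOp k (aOp j y) = (if j + k = -1 then (1 : ℂ) else 0) • y - aOp j (aOp k y) :=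
    fun y => eq_sub_of_add_eq' (car j k y)
  by_cases h : 0 ≤ i
  · simp only [NO, h, if_true, LinearMap.comp_apply, h1, h2, map_sub, map_smul]
    abel
  · simp only [NO, h, if_false, LinearMap.neg_apply, map_neg, LinearMap.comp_apply, h1, h2,
      map_sub, map_smul]
    abel

lemma LL_comm (m k : ℤ) (x : FockD) :
    LL m (aOp k x) - aOp k (LL m x) = ((k : ℂ) + (1 - m) / 2) • aOp (k - m) x := by
  have hf := fun y => NS_fin 0 (fun i => (i : ℂ)) (-m - 1) y
  simp only [← NO_eq] at hf
  have hf2 : (Function.support fun i : ℤ => aOp k ((i : ℂ) • NO i (-m - 1 - i) x)).Finite :=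
    (hf x).subset (Function.support_comp_subset (map_zero (aOp k)) _)
  rw [LL_apply, LL_apply, map_smul, ← smul_sub]
  have hm : aOp k (∑ᶠ i : ℤ, (i : ℂ) • NO i (-m - 1 - i) x)
      = ∑ᶠ i : ℤ, aOp k ((i : ℂ) • NO i (-m - 1 - i) x) :=
    (aOp k).toAddMonoidHom.map_finsum (hf x)
  rw [hm, ← finsum_sub_distrib (hf _) hf2]
  have h1 : ∀ i : ℤ, (i : ℂ) • NO i (-m - 1 - i) (aOp k x) - aOp k ((i : ℂ) • NO i (-m - 1 - i) x)
      = (if i = k - m then ((k - m : ℤ) : ℂ) • aOp (k - m) x else 0)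
        - (if i = -1 - k then ((-1 - k : ℤ) : ℂ) • aOp (k - m) x else 0) := by
    intro i
    rw [map_smul, ← smul_sub, NO_comm, smul_sub]
    congr 1
    · by_cases h : i = k - m
      · subst h; simp; intro h; omega
      · rw [if_neg h, if_neg (by omega)]; simp
    · by_cases h : i = -1 - k
      · subst h
        have e : -m - 1 - (-1 - k) = k - m := by ring
        simp [e]
      · rw [if_neg h, if_neg (by omega)]; simp
  rw [finsum_congr h1, finsum_sub_distrib]
  · rw [finsum_eq_single _ (k - m) (by intro i hi; simp [hi]),
      finsum_eq_single _ (-1 - k) (by intro i hi; simp [hi])]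
    simp only [if_true]
    rw [← sub_smul, smul_smul]
    congr 1
    push_cast
    ring
  · exact (Set.finite_singleton (k - m)).subset (by intro i; simp; tauto)
  · exact (Set.finite_singleton (-1 - k)).subset (by intro i; simp; tauto)

lemma LL_NO (m i j : ℤ) (x : FockD) :
    LL m (NO i j x) - NO i j (LL m x) = ((i : ℂ) + (1 - m) / 2) • NS m (i - m) j x
      + ((j : ℂ) + (1 - m) / 2) • NO i (j - m) x := by
  have hc : ∀ k y, LL m (aOp k y) = ((k : ℂ) + (1 - m) / 2) • aOp (k - m) y + aOp k (LL m y) :=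
    fun k y => eq_add_of_sub_eq (LL_comm m k y)
  by_cases h : 0 ≤ i
  · simp only [NO, NS, h, sub_add_cancel, if_true, LinearMap.comp_apply, hc, map_add, map_smul]
    abel
  · simp only [NO, NS, h, sub_add_cancel, if_false, LinearMap.comp_apply, LinearMap.neg_apply,
      map_neg, hc, map_add, map_smul, smul_neg]
    abel

lemma central_nat (m : ℕ) : ∀ r : ℕ, ∑ t ∈ Finset.range r,
    (1 / 2 : ℂ) * ((m - 1 - t) * ((m + 1) / 2 - 1 - t)) =
      (r * m * (m + 1) / 2 - (m + (m + 1) / 2) * r * (r + 1) / 2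
        + r * (r + 1) * (2 * r + 1) / 6) / 2 := by
  intro r
  induction r with
  | zero => simp
  | succ r ih => rw [Finset.sum_range_succ, ih]; push_cast; ring

lemma central_sum (m : ℕ) (x : FockD) :
    (1 / 2 : ℂ) • ∑ᶠ i : ℤ, (((i : ℂ) + m) * (i + (m + 1) / 2)) •
      (if 0 ≤ i then (if 0 ≤ i + (m : ℤ) then 0 else -1)
        else (if 0 ≤ i + (m : ℤ) then 1 else 0) : ℂ) • x
      = (((m : ℂ) ^ 3 - m) / 24) • x := by
  rw [finsum_eq_sum_of_support_subset (s := (Finset.range m).image (fun t : ℕ => -1 - (t : ℤ)))]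
  · rw [Finset.sum_image (by intro a _ b _ h; simpa using h), Finset.smul_sum]
    have : ∀ t ∈ Finset.range m, (1 / 2 : ℂ) • ((((-1 - (t : ℤ) : ℤ) : ℂ) + m) *
        ((-1 - (t : ℤ) : ℤ) + (m + 1) / 2)) •
      (if 0 ≤ (-1 - (t : ℤ)) then (if 0 ≤ (-1 - (t : ℤ)) + (m : ℤ) then 0 else -1)
        else (if 0 ≤ (-1 - (t : ℤ)) + (m : ℤ) then 1 else 0) : ℂ) • x
        = ((1 / 2 : ℂ) * ((m - 1 - t) * ((m + 1) / 2 - 1 - t))) • x := by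
      intro t ht
      rw [Finset.mem_range] at ht
      rw [if_neg (by omega), if_pos (by omega), one_smul, smul_smul]
      congr 1
      push_cast
      ring
    rw [Finset.sum_congr rfl this, ← Finset.sum_smul, central_nat]
    congr 1
    ring
  · intro i hi
    simp only [Finset.coe_image, Finset.coe_range, Set.mem_image, Set.mem_Iio]
    by_contra hc
    apply hi
    by_cases h : 0 ≤ i
    · have : 0 ≤ i + (m : ℤ) := by omega
      simp [h, this]
    · have : ¬ 0 ≤ i + (m : ℤ) := fun h' => hc ⟨(-1 - i).toNat, by omega, by omega⟩
      simp [h, this]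

lemma main_pos (m n : ℤ) (x : FockD) (hmn : m = -n → 0 ≤ m) :
    LL m (LL n x) - LL n (LL m x)
      = ((m - n : ℤ) : ℂ) • LL (m + n) x
        + (if m = -n then ((m ^ 3 - m : ℤ) : ℂ) / 24 else 0) • x := by
  have hf := fun y => NS_fin 0 (fun i => (i : ℂ)) (-n - 1) y
  simp only [← NO_eq] at hf
  have hm : LL m (∑ᶠ i : ℤ, (i : ℂ) • NO i (-n - 1 - i) x)
      = ∑ᶠ i : ℤ, LL m ((i : ℂ) • NO i (-n - 1 - i) x) :=
    (LL m).toAddMonoidHom.map_finsum (hf x)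
  have hf2 : (Function.support fun i : ℤ => LL m ((i : ℂ) • NO i (-n - 1 - i) x)).Finite :=
    (hf x).subset (Function.support_comp_subset (map_zero (LL m)) _)
  have hA : (Function.support fun i : ℤ => (((i : ℂ) + m) * (i + (m + 1) / 2)) •
      NS m i (-(m + n) - 1 - i) x).Finite :=
    NS_fin m (fun i => (((i : ℂ) + m) * (i + (m + 1) / 2))) _ x
  have hO : ∀ g : ℤ → ℂ, (Function.support fun i : ℤ => g i •
      NO i (-(m + n) - 1 - i) x).Finite := by
    intro g; simp only [NO_eq]; exact NS_fin 0 g _ x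
  set g2 : ℤ → ℂ := fun i => (i : ℂ) * (((-n - 1 - i : ℤ) : ℂ) + (1 - m) / 2) with hg2
  -- first sum before reindexing
  let F : ℤ → FockD := fun i => (((i : ℂ) + m) * (i + (m + 1) / 2)) • NS m i (-(m + n) - 1 - i) x
  have hA' : (Function.support fun i : ℤ => F (i - m)).Finite :=
    hA.preimage (f := fun i : ℤ => i - m) (by intro a _ b _ h; simpa using h)
  have hre : ∑ᶠ i : ℤ, F (i - m) = ∑ᶠ i : ℤ, F i :=
    finsum_comp_equiv (Equiv.subRight m) (f := F)
  have step1 : LL m (LL n x) - LL n (LL m x) =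
      (1 / 2 : ℂ) • (∑ᶠ i : ℤ, F i + ∑ᶠ i : ℤ, g2 i • NO i (-(m + n) - 1 - i) x) := by
    rw [LL_apply n x, LL_apply n (LL m x), map_smul, hm, ← smul_sub,
      ← finsum_sub_distrib hf2 (hf _), ← hre, ← finsum_add_distrib hA' (hO g2)]
    congr 1
    refine finsum_congr fun i => ?_
    rw [map_smul, ← smul_sub, LL_NO, smul_add, smul_smul, smul_smul]
    have e1 : -(m + n) - 1 - (i - m) = -n - 1 - i := by ring
    have e2 : -n - 1 - i - m = -(m + n) - 1 - i := by ring
    simp only [F, e1, e2, hg2]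
    congr 2
    push_cast
    ring
  let d : ℤ → ℂ := fun i => (if 0 ≤ i then (if 0 ≤ i + m then 0 else -1)
        else (if 0 ≤ i + m then 1 else 0) : ℂ)
  let G : ℤ → FockD := fun i => (((i : ℂ) + m) * (i + (m + 1) / 2)) •
    ((if m = -n then (1 : ℂ) else 0) * d i) • x
  have hFG : ∀ i, F i = (((i : ℂ) + m) * (i + (m + 1) / 2)) • NO i (-(m + n) - 1 - i) x + G i := by
    intro i
    simp only [F, G, d]
    rw [NS_diff, smul_add]
    have : (i + (-(m + n) - 1 - i) = -1) ↔ m = -n := by omega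
    simp only [this]
  have hG : (Function.support G).Finite := by
    have : G = fun i => F i - (((i : ℂ) + m) * (i + (m + 1) / 2)) • NO i (-(m + n) - 1 - i) x := by
      funext i; rw [hFG]; abel
    rw [this]
    exact (hA.union (hO fun i => (((i : ℂ) + m) * (i + (m + 1) / 2)))).subset
      (Function.support_sub _ _)
  have hGs : (1 / 2 : ℂ) • ∑ᶠ i, G i
      = (if m = -n then ((m ^ 3 - m : ℤ) : ℂ) / 24 else 0) • x := by
    by_cases h : m = -n
    · obtain ⟨k, rfl⟩ := Int.eq_ofNat_of_zero_le (hmn h)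
      have := central_sum k x
      simp only [G, d, if_pos h, one_mul]
      push_cast
      exact this
    · simp [G, h]
  rw [step1, finsum_congr hFG, finsum_add_distrib (hO _) hG, add_right_comm, smul_add, hGs,
    ← finsum_add_distrib (hO _) (hO _)]
  congr 1
  have hz := NO_sum_zero (-(m + n) - 1) x
  have hO1 : (Function.support fun i : ℤ => NO i (-(m + n) - 1 - i) x).Finite := by
    simpa using hO (fun _ => 1)
  have : ∀ i : ℤ, (((i : ℂ) + m) * (i + (m + 1) / 2)) • NO i (-(m + n) - 1 - i) x
      + g2 i • NO i (-(m + n) - 1 - i) x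
      = ((m - n : ℤ) : ℂ) • ((i : ℂ) • NO i (-(m + n) - 1 - i) x)
        + ((m : ℂ) * (m + 1) / 2) • NO i (-(m + n) - 1 - i) x := by
    intro i
    rw [smul_smul, ← add_smul, ← add_smul]
    congr 1
    simp only [hg2]
    push_cast
    ring
  rw [finsum_congr this, finsum_add_distrib, ← smul_finsum' _ hO1, hz, smul_zero, add_zero,
    ← smul_finsum' _ (hO _), LL_apply, smul_comm]
  · simp only [smul_smul]
    exact hO (fun i => ((m - n : ℤ) : ℂ) * i)
  · exact hO _

/-- The operators `L^{1/2}_m` on the neutral fermion Fock space satisfy the Virasoro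
relations with central charge `1/2`. -/
theorem virasoro_half_charge (m n : ℤ) (x : FockD) :
    LhalfD m (LhalfD n x) - LhalfD n (LhalfD m x)
      = ((m - n : ℤ) : ℂ) • LhalfD (m + n) x
        + (if m = -n then ((m ^ 3 - m : ℤ) : ℂ) / 24 else 0) • x := by
  change LL m (LL n x) - LL n (LL m x) = ((m - n : ℤ) : ℂ) • LL (m + n) x + _
  by_cases h : m = -n → 0 ≤ m
  · exact main_pos m n x h
  · push Not at h
    have := main_pos n m x (by intro; omega)
    rw [← neg_sub, this, if_pos h.1, if_pos (by omega), add_comm n m, neg_add, ← neg_smul,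
      ← neg_smul]
    obtain ⟨rfl, _⟩ := h
    congr 2 <;> push_cast <;> ring
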